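/- Let r = p^m with p prime, let A = 𝔽_r[T] and k = 𝔽_r(T), and let v = (P) be a maximal ideal of A generated by a monic irreducible polynomial P. Let k_v be the completion of k with respect to the P-adic absolute value, let Ω_v be a fixed algebraic closure of k_v equipped with the spectral norm, let k_v^sep ⊆ Ω_v be the separable closure of k_v, let C_v be the completion of Ω_v, and let ι_v : Ω_v → C_v be the canonical embedding. Let t ≥ 1 and let N be a nilpotent t×t matrix with entries in C_v. Then there exists a unique 𝔽_r-algebra homomorphism φ : k_v^sep → M_t(C_v) such that (i) φ(T) = ι_v(T)·1 + N, (ii) the restriction of φ to k_v is continuous (M_t(C_v) carrying the topology of entrywise convergence), and (iii) for every x ∈ k_v^sep the matrix φ(x) − ι_v(x)·1 is nilpotent. Moreover φ is injective. -/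

import Mathlib

set_option synthInstance.maxHeartbeats 1000000
set_option maxHeartbeats 1000000

open IsDedekindDomain

/-- The completion `k_v` of `k = 𝔽_r(T)` at a maximal ideal `v = (P)` of `A = 𝔽_r[T]`. -/
noncomputable abbrev kvCompletion (Fr : Type*) [Field Fr]
    (v : HeightOneSpectrum (Polynomial Fr)) : Type _ :=
  v.adicCompletion (RatFunc Fr)

/-- The image of `T` in `k_v`. -/
noncomputable def kvT (Fr : Type*) [Field Fr] (v : HeightOneSpectrum (Polynomial Fr)) :
    kvCompletion Fr v :=
  algebraMap (RatFunc Fr) (kvCompletion Fr v) RatFunc.X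

/-- The canonical algebra structure of `k_v` on an intermediate field of an extension of
`k_v` (registered explicitly to help typeclass inference). -/
noncomputable local instance kvIntermediateFieldAlgebra (Fr : Type*) [Field Fr]
    (v : HeightOneSpectrum (Polynomial Fr)) (Ω : Type*) [Field Ω]
    [Algebra (kvCompletion Fr v) Ω] (S : IntermediateField (kvCompletion Fr v) Ω) :
    Algebra (kvCompletion Fr v) S :=
  inferInstanceAs (Algebra (kvCompletion Fr v) S.toSubalgebra)

/-!
Let `q` be a power of `p` large enough that `s ^ q = 0` for every nilpotent element `s` of the
target `S`. By additivity of the Frobenius, `φ x - x` is nilpotent for all `x` exactly when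
`φ` fixes all `q`-th powers, so the homomorphisms in question are `L ^ q`-algebra homomorphisms
`L → S`. Since `k = 𝔽_r(T)` is dense in `K = k_v` and `K ^ q` is complete, `K = K ^ q (T)`, and then
`L = L ^ q (T)` because `L / K` is separable. As `T` is not a `p`-th power in `L`, its minimal
polynomial over `L ^ q` is `X ^ q - T ^ q`, which has the root `T + N`; hence `T ↦ T + N` defines
exactly one such homomorphism. It is continuous on `K` because `K` is finite over the complete
field `K ^ q`.
-/

open IntermediateField IsPurelyInseparable

section SimpleExtension

variable {F L : Type*} [Field F] [Field L] [Algebra F L] {T : L}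

theorem finiteDimensional_of_adjoin_simple_eq_top (hT : IsIntegral F T) (hgen : F⟮T⟯ = ⊤) :
    FiniteDimensional F L :=
  (PowerBasis.ofAdjoinEqTop hT
    (Algebra.adjoin_eq_top_of_primitive_element hT.isAlgebraic hgen)).finite

theorem algHom_ext_of_adjoin_simple_eq_top {S : Type*} [Semiring S] [Algebra F S]
    (hT : IsIntegral F T) (hgen : F⟮T⟯ = ⊤) {φ ψ : L →ₐ[F] S} (h : φ T = ψ T) : φ = ψ :=
  AlgHom.ext_of_adjoin_eq_top (Algebra.adjoin_eq_top_of_primitive_element hT.isAlgebraic hgen)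
    (Set.eqOn_singleton.mpr h)

theorem exists_algHom_apply_eq_of_adjoin_simple_eq_top {S : Type*} [Ring S] [Algebra F S]
    (p : ℕ) [ExpChar F p] [IsPurelyInseparable F L] (hgen : F⟮T⟯ = ⊤) {s : S}
    (hs : s ^ p ^ elemExponent F T = algebraMap F S (elemReduct F T)) :
    ∃ φ : L →ₐ[F] S, φ T = s := by
  have hT : IsIntegral F T := IsPurelyInseparable.isIntegral' F T
  let pb := PowerBasis.ofAdjoinEqTop hT
    (Algebra.adjoin_eq_top_of_primitive_element hT.isAlgebraic hgen)
  have hroot : Polynomial.aeval s (minpoly F pb.gen) = 0 := by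
    simp [pb, minpoly_eq' F p T, hs]
  exact ⟨pb.lift s hroot, pb.lift_gen s hroot⟩

end SimpleExtension

section Frobenius

variable (L : Type*) [Field L] (p n : ℕ) [ExpChar L p]

/-- The subfield `L ^ (p ^ n)` of `p ^ n`-th powers of a field `L` of exponential characteristic
`p`. -/
abbrev iterateFrobeniusRange : Subfield L :=
  (iterateFrobenius L p n).fieldRange

instance isPurelyInseparable_iterateFrobeniusRange :
    IsPurelyInseparable (iterateFrobeniusRange L p n) L :=
  (isPurelyInseparable_iff_pow_mem _ p).mpr fun x => ⟨n, ⟨x ^ p ^ n, x, rfl⟩, rfl⟩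

theorem algebraMap_mem_iterateFrobeniusRange {k : Type*} [Field k] [ExpChar k p] [PerfectRing k p]
    [Algebra k L] (c : k) : algebraMap k L c ∈ iterateFrobeniusRange L p n := by
  obtain ⟨d, rfl⟩ := (bijective_iterateFrobenius k p n).surjective c
  exact ⟨algebraMap k L d, ((algebraMap k L).map_iterateFrobenius p d n).symm⟩

variable {L p n}

theorem le_elemExponent_iterateFrobeniusRange {T : L} (hT : ∀ b : L, b ^ p ≠ T) :
    n ≤ elemExponent (iterateFrobeniusRange L p n) T := by
  obtain ⟨⟨_, b, rfl⟩, hb⟩ := elemExponent_def' (iterateFrobeniusRange L p n) p T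
  generalize elemExponent (iterateFrobeniusRange L p n) T = e at hb
  by_contra! h
  obtain ⟨d, rfl⟩ := Nat.exists_eq_add_of_lt h
  refine hT (b ^ p ^ d) (iterateFrobenius_inj L p e ?_)
  calc ((b ^ p ^ d) ^ p) ^ p ^ e = b ^ p ^ (e + d + 1) := by ring
    _ = T ^ p ^ e := hb

variable {S : Type*} [Ring S] [Nontrivial S] [Algebra L S]

theorem forall_isNilpotent_sub_algebraMap_iff (hS : ∀ s : S, IsNilpotent s → s ^ p ^ n = 0)
    {φ : L →+* S} :
    (∀ x, IsNilpotent (φ x - algebraMap L S x)) ↔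
      ∀ y ∈ iterateFrobeniusRange L p n, φ y = algebraMap L S y := by
  have : ExpChar S p := expChar_of_injective_algebraMap (algebraMap L S).injective p
  have hpow (x : L) : IsNilpotent (φ x - algebraMap L S x) ↔
      φ (x ^ p ^ n) = algebraMap L S (x ^ p ^ n) := by
    rw [← sub_eq_zero, map_pow, map_pow,
      ← sub_pow_expChar_pow_of_commute p n (Algebra.commutes x (φ x)).symm]
    exact ⟨hS _, fun h => ⟨_, h⟩⟩
  simp only [hpow, RingHom.mem_fieldRange, forall_exists_index, forall_apply_eq_imp_iff,
    iterateFrobenius_def]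

theorem exists_algHom_apply_eq_add {T : L} (hT : ∀ b : L, b ^ p ≠ T)
    (hgen : (iterateFrobeniusRange L p n)⟮T⟯ = ⊤) {N : S} (hN : N ^ p ^ n = 0) :
    ∃ φ : L →ₐ[iterateFrobeniusRange L p n] S, φ T = algebraMap L S T + N := by
  have : ExpChar S p := expChar_of_injective_algebraMap (algebraMap L S).injective p
  refine exists_algHom_apply_eq_of_adjoin_simple_eq_top p hgen ?_
  have hNe : N ^ p ^ elemExponent (iterateFrobeniusRange L p n) T = 0 :=
    pow_eq_zero_of_le (Nat.pow_le_pow_right (expChar_pos L p)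
      (le_elemExponent_iterateFrobeniusRange hT)) hN
  rw [add_pow_expChar_pow_of_commute p _ (Algebra.commutes T N), hNe, add_zero, ← map_pow,
    ← algebraMap_elemReduct_eq' (iterateFrobeniusRange L p n) p T,
    ← IsScalarTower.algebraMap_apply]

theorem existsUnique_ringHom_apply_eq_add {T : L} (hT : ∀ b : L, b ^ p ≠ T)
    (hgen : (iterateFrobeniusRange L p n)⟮T⟯ = ⊤) {N : S} (hN : N ^ p ^ n = 0) :
    ∃! φ : L →+* S, φ T = algebraMap L S T + N ∧
      ∀ y ∈ iterateFrobeniusRange L p n, φ y = algebraMap L S y := by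
  obtain ⟨φ, hφ⟩ := exists_algHom_apply_eq_add hT hgen hN
  refine ⟨φ, ⟨hφ, fun y hy => φ.commutes ⟨y, hy⟩⟩, fun ψ ⟨hψT, hψ⟩ => ?_⟩
  let χ : L →ₐ[iterateFrobeniusRange L p n] S := { ψ with commutes' := fun y => hψ y y.2 }
  have hχ : χ = φ := algHom_ext_of_adjoin_simple_eq_top
    (IsPurelyInseparable.isIntegral' _ T) hgen (hψT.trans hφ.symm)
  exact congrArg AlgHom.toRingHom hχ

end Frobenius

section Separable

variable {K L : Type*} [Field K] [Field L] [Algebra K L] [Algebra.IsSeparable K L]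
  {p : ℕ} [ExpChar K p]

theorem pow_expChar_ne_algebraMap_of_isSeparable {T : K} (hT : ∀ b : K, b ^ p ≠ T) (b : L) :
    b ^ p ≠ algebraMap K L T := by
  intro hb
  have hmem : b ∈ perfectClosure K L :=
    (mem_perfectClosure_iff_pow_mem p).mpr ⟨1, T, by rw [pow_one, hb]⟩
  rw [perfectClosure.eq_bot_of_isSeparable, mem_bot] at hmem
  obtain ⟨a, rfl⟩ := hmem
  exact hT a ((algebraMap K L).injective (by rw [map_pow, hb]))

theorem eq_top_of_forall_exists_pow_mem {M : IntermediateField K L}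
    (hM : ∀ x : L, ∃ n, x ^ p ^ n ∈ M) : M = ⊤ := by
  have : Algebra.IsSeparable M L := Algebra.isSeparable_tower_top_of_isSeparable K M L
  have : IsPurelyInseparable M L := (isPurelyInseparable_iff_pow_mem M p).mpr fun x =>
    (hM x).imp fun n hn => ⟨⟨_, hn⟩, rfl⟩
  refine eq_top_iff.mpr fun x _ => ?_
  obtain ⟨y, rfl⟩ := surjective_algebraMap_of_isSeparable M L x
  exact y.2

theorem adjoin_iterateFrobeniusRange_algebraMap_eq_top [ExpChar L p] {n : ℕ} {T : K}
    (hgen : (iterateFrobeniusRange K p n)⟮T⟯ = ⊤) :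
    (iterateFrobeniusRange L p n)⟮algebraMap K L T⟯ = ⊤ := by
  set M := (iterateFrobeniusRange L p n)⟮algebraMap K L T⟯
  have hpow (x : L) : x ^ p ^ n ∈ M := M.algebraMap_mem ⟨x ^ p ^ n, x, rfl⟩
  have hle : (iterateFrobeniusRange K p n)⟮T⟯.toSubfield ≤
      M.toSubfield.comap (algebraMap K L) := by
    refine adjoin_le_subfield _ _ ?_ (Set.singleton_subset_iff.mpr (mem_adjoin_simple_self _ _))
    rintro _ ⟨⟨_, a, rfl⟩, rfl⟩
    have ha : algebraMap K L (a ^ p ^ n) ∈ M := map_pow (algebraMap K L) a _ ▸ hpow _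
    exact ha
  have hK (a : K) : algebraMap K L a ∈ M.toSubfield :=
    hle (show a ∈ (iterateFrobeniusRange K p n)⟮T⟯ from hgen ▸ mem_top)
  have htop : M.toSubfield.toIntermediateField hK = ⊤ :=
    eq_top_of_forall_exists_pow_mem (p := p) fun x => ⟨n, hpow x⟩
  exact eq_top_iff.mpr fun x _ => (SetLike.ext_iff.mp htop x).mpr mem_top

end Separable

section Topology

theorem isUniformInducing_iterateFrobenius {K : Type*} [NormedField K] {p n : ℕ} [ExpChar K p] :
    IsUniformInducing (iterateFrobenius K p n) := by
  have hq : p ^ n ≠ 0 := (expChar_pow_pos K p n).ne'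
  have hdist (x y : K) :
      dist (iterateFrobenius K p n x) (iterateFrobenius K p n y) = dist x y ^ p ^ n := by
    rw [dist_eq_norm, ← map_sub, iterateFrobenius_def, norm_pow, dist_eq_norm]
  refine Metric.isUniformInducing_iff.mpr ⟨Metric.uniformContinuous_iff.mpr fun ε hε => ?_,
    fun δ hδ => ⟨δ ^ p ^ n, pow_pos hδ _, fun {a b} h => ?_⟩⟩
  · refine ⟨min ε 1, by positivity, fun a b h => ?_⟩
    rw [hdist]
    exact (pow_le_of_le_one dist_nonneg (h.le.trans (min_le_right _ _)) hq).trans_lt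
      (h.trans_le (min_le_left _ _))
  · exact lt_of_pow_lt_pow_left₀ _ hδ.le (hdist a b ▸ h)

instance completeSpace_iterateFrobeniusRange {K : Type*} [NormedField K] [CompleteSpace K]
    {p n : ℕ} [ExpChar K p] : CompleteSpace (iterateFrobeniusRange K p n) :=
  isUniformInducing_iterateFrobenius.isComplete_range.completeSpace_coe

variable {K : Type*} [NontriviallyNormedField K] {p n : ℕ} [ExpChar K p]

noncomputable instance nontriviallyNormedFieldIterateFrobeniusRange :
    NontriviallyNormedField (iterateFrobeniusRange K p n) where
  non_trivial := by
    obtain ⟨x, hx⟩ := NormedField.exists_one_lt_norm K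
    refine ⟨⟨x ^ p ^ n, x, rfl⟩, ?_⟩
    change 1 < ‖x ^ p ^ n‖
    rw [norm_pow]
    exact one_lt_pow₀ hx (expChar_pow_pos K p n).ne'

variable [CompleteSpace K]

-- `K ^ (p ^ n) (T)` is a finite-dimensional subspace over a complete field, hence closed in `K`.
theorem adjoin_iterateFrobeniusRange_eq_top_of_dense {k : Type*} [Field k] [ExpChar k p]
    [PerfectRing k p] [Algebra k K] {T : K} (hT : Dense (k⟮T⟯ : Set K)) :
    (iterateFrobeniusRange K p n)⟮T⟯ = ⊤ := by
  set M := (iterateFrobeniusRange K p n)⟮T⟯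
  have : FiniteDimensional (iterateFrobeniusRange K p n) (Subalgebra.toSubmodule M.toSubalgebra) :=
    adjoin.finiteDimensional (IsPurelyInseparable.isIntegral' (iterateFrobeniusRange K p n) T)
  have hclosed : IsClosed (M : Set K) :=
    (Subalgebra.toSubmodule M.toSubalgebra).closed_of_finiteDimensional
  have hle : k⟮T⟯.toSubfield ≤ M.toSubfield :=
    adjoin_le_subfield _ _
      (Set.range_subset_iff.mpr fun c =>
        M.algebraMap_mem ⟨_, algebraMap_mem_iterateFrobeniusRange K p n c⟩)
      (Set.singleton_subset_iff.mpr (mem_adjoin_simple_self _ _))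
  exact SetLike.coe_injective (hclosed.closure_eq.symm.trans (hT.mono hle).closure_eq)

theorem continuous_of_forall_mem_iterateFrobeniusRange {S : Type*} [Ring S] [Algebra K S]
    [TopologicalSpace S] [IsTopologicalAddGroup S] [ContinuousSMul K S]
    [FiniteDimensional (iterateFrobeniusRange K p n) K] {φ : K →+* S}
    (hφ : ∀ y ∈ iterateFrobeniusRange K p n, φ y = algebraMap K S y) : Continuous φ := by
  let g : K →ₐ[iterateFrobeniusRange K p n] S := { φ with commutes' := fun y => hφ y y.2 }
  exact g.toLinearMap.continuous_of_finiteDimensional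

end Topology

section Deformation

variable {k K L S : Type*} [Field k] [NontriviallyNormedField K] [CompleteSpace K] [Algebra k K]
  [Field L] [Algebra K L] [Ring S] [Nontrivial S] [Algebra K S]
  {p n : ℕ} [ExpChar k p] [PerfectRing k p] {T : K}

theorem existsUnique_algHom_of_dense_adjoin_simple [Algebra.IsSeparable K L] [Algebra k L]
    [Algebra k S] [Algebra L S] [IsScalarTower k L S] [IsScalarTower K L S]
    (hdense : Dense (k⟮T⟯ : Set K)) (hT : ∀ b : K, b ^ p ≠ T)
    (hS : ∀ s : S, IsNilpotent s → s ^ p ^ n = 0) {N : S} (hN : IsNilpotent N) :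
    ∃! φ : L →ₐ[k] S, φ (algebraMap K L T) = algebraMap K S T + N ∧
      ∀ x, IsNilpotent (φ x - algebraMap L S x) := by
  have : ExpChar K p := expChar_of_injective_algebraMap (algebraMap k K).injective p
  have : ExpChar L p := expChar_of_injective_algebraMap (algebraMap k L).injective p
  have hgen : (iterateFrobeniusRange L p n)⟮algebraMap K L T⟯ = ⊤ :=
    adjoin_iterateFrobeniusRange_algebraMap_eq_top
      (adjoin_iterateFrobeniusRange_eq_top_of_dense hdense)
  obtain ⟨φ, ⟨hφT, hφ⟩, huniq⟩ := existsUnique_ringHom_apply_eq_add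
    (pow_expChar_ne_algebraMap_of_isSeparable hT) hgen (hS N hN)
  have hφk (c : k) : φ (algebraMap k L c) = algebraMap k S c := by
    rw [IsScalarTower.algebraMap_apply k L S]
    exact hφ _ (algebraMap_mem_iterateFrobeniusRange L p n c)
  simp only [← forall_isNilpotent_sub_algebraMap_iff hS,
    ← IsScalarTower.algebraMap_apply K L S] at hφT hφ huniq
  exact ⟨{ φ with commutes' := hφk }, ⟨hφT, hφ⟩, fun ψ hψ =>
    AlgHom.coe_ringHom_injective (huniq ψ hψ)⟩

theorem continuous_of_forall_isNilpotent_sub_algebraMap [TopologicalSpace S]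
    [IsTopologicalAddGroup S] [ContinuousSMul K S] (hdense : Dense (k⟮T⟯ : Set K))
    (hS : ∀ s : S, IsNilpotent s → s ^ p ^ n = 0) {φ : K →+* S}
    (hφ : ∀ x, IsNilpotent (φ x - algebraMap K S x)) : Continuous φ := by
  have : ExpChar K p := expChar_of_injective_algebraMap (algebraMap k K).injective p
  have : FiniteDimensional (iterateFrobeniusRange K p n) K :=
    finiteDimensional_of_adjoin_simple_eq_top (IsPurelyInseparable.isIntegral' _ T)
      (adjoin_iterateFrobeniusRange_eq_top_of_dense hdense)
  exact continuous_of_forall_mem_iterateFrobeniusRange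
    ((forall_isNilpotent_sub_algebraMap_iff hS).mp hφ)

end Deformation

section AdicCompletion

variable {F : Type*} [Field F] (v : HeightOneSpectrum (Polynomial F))

theorem coe_adjoin_algebraMap_ratFunc_X (E : Type*) [Field E] [Algebra F E] [Algebra (RatFunc F) E]
    [IsScalarTower F (RatFunc F) E] :
    (F⟮algebraMap (RatFunc F) E RatFunc.X⟯ : Set E) = Set.range (algebraMap (RatFunc F) E) := by
  have h := adjoin_map F {RatFunc.X} (IsScalarTower.toAlgHom F (RatFunc F) E)
  rw [RatFunc.adjoin_X, Set.image_singleton, IsScalarTower.coe_toAlgHom'] at h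
  rw [← h, coe_map, coe_top, Set.image_univ, IsScalarTower.coe_toAlgHom']

variable [Algebra F (kvCompletion F v)] [IsScalarTower F (RatFunc F) (kvCompletion F v)]

theorem dense_adjoin_kvT : Dense (F⟮kvT F v⟯ : Set (kvCompletion F v)) := by
  rw [kvT, coe_adjoin_algebraMap_ratFunc_X]
  exact v.denseRange_algebraMap (RatFunc F)

-- If `T` were a `p`-th power, so would be every element of `F(T)`, including a uniformizer.
theorem pow_ne_kvT (p : ℕ) [Fact p.Prime] [CharP F p] [PerfectRing F p] (b : kvCompletion F v) :
    b ^ p ≠ kvT F v := by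
  intro hb
  have : ExpChar F p := .prime Fact.out
  have : ExpChar (kvCompletion F v) p :=
    expChar_of_injective_algebraMap (algebraMap F _).injective p
  obtain ⟨π, hπ⟩ := v.valuation_exists_uniformizer (RatFunc F)
  have hle : F⟮kvT F v⟯.toSubfield ≤ iterateFrobeniusRange (kvCompletion F v) p 1 :=
    adjoin_le_subfield _ _
      (Set.range_subset_iff.mpr (algebraMap_mem_iterateFrobeniusRange _ p 1))
      (Set.singleton_subset_iff.mpr ⟨b, by rw [iterateFrobenius_one_apply, hb]⟩)
  have hπmem : algebraMap (RatFunc F) (kvCompletion F v) π ∈ (F⟮kvT F v⟯ : Set _) := by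
    rw [kvT, coe_adjoin_algebraMap_ratFunc_X]
    exact ⟨π, rfl⟩
  obtain ⟨y, hy⟩ := hle hπmem
  have hval : Valued.v y ^ p = WithZero.exp (-1 : ℤ) := by
    rw [← map_pow, ← iterateFrobenius_one_apply, hy, ← hπ]
    exact v.valuedAdicCompletion_eq_valuation' π
  have hlog : (p : ℤ) * WithZero.log (Valued.v y) = -1 := by
    rw [← nsmul_eq_mul, ← WithZero.log_pow, hval, WithZero.log_exp]
  have hdvd : (p : ℤ) ∣ 1 := dvd_neg.mp ⟨_, hlog.symm⟩
  exact (Fact.out : p.Prime).not_dvd_one (Int.natCast_dvd_natCast.mp hdvd)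

end AdicCompletion

theorem matrix_pow_card_eq_zero_of_isNilpotent {R ι : Type*} [CommRing R] [IsDomain R] [Fintype ι]
    [DecidableEq ι] {M : Matrix ι ι R} (hM : IsNilpotent M) : M ^ Fintype.card ι = 0 := by
  have hchar : M.charpoly = Polynomial.X ^ Fintype.card ι :=
    sub_eq_zero.mp (Matrix.isNilpotent_charpoly_sub_pow_of_isNilpotent hM).eq_zero
  simpa [hchar] using M.aeval_self_charpoly

theorem stmt_12_general {p n : ℕ} [Fact p.Prime] {F : Type*} [Field F] [CharP F p]
    [PerfectRing F p] (v : HeightOneSpectrum (Polynomial F)) [Algebra F (kvCompletion F v)]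
    [IsScalarTower F (RatFunc F) (kvCompletion F v)]
    {L : Type*} [Field L] [Algebra (kvCompletion F v) L]
    [Algebra.IsSeparable (kvCompletion F v) L] [Algebra F L]
    {S : Type*} [Ring S] [Nontrivial S] [TopologicalSpace S] [IsTopologicalAddGroup S] [Algebra F S]
    [Algebra (kvCompletion F v) S] [ContinuousSMul (kvCompletion F v) S] [Algebra L S]
    [IsScalarTower F L S] [IsScalarTower (kvCompletion F v) L S]
    (hS : ∀ s : S, IsNilpotent s → s ^ n = 0) {N : S} (hN : IsNilpotent N) :
    (∃! φ : L →ₐ[F] S,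
      φ (algebraMap (kvCompletion F v) L (kvT F v)) =
          algebraMap (kvCompletion F v) S (kvT F v) + N ∧
        ∀ x, IsNilpotent (φ x - algebraMap L S x)) ∧
    ∀ φ : L →ₐ[F] S, (∀ x, IsNilpotent (φ x - algebraMap L S x)) →
      Continuous fun x : kvCompletion F v => φ (algebraMap (kvCompletion F v) L x) := by
  let := Valuation.IsRankOneDiscrete.rankOne
    (Valued.v : Valuation (kvCompletion F v) _) (e := 2) (by norm_num)
  let := Valued.toNontriviallyNormedField (kvCompletion F v) (WithZero (Multiplicative ℤ))
  have : ExpChar F p := .prime Fact.out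
  have hSp (s : S) (hs : IsNilpotent s) : s ^ p ^ n = 0 :=
    pow_eq_zero_of_le (Nat.lt_pow_self (Fact.out : p.Prime).one_lt).le (hS s hs)
  refine ⟨existsUnique_algHom_of_dense_adjoin_simple (dense_adjoin_kvT v) (pow_ne_kvT v p) hSp hN,
    fun φ hφ => continuous_of_forall_isNilpotent_sub_algebraMap
      (φ := φ.toRingHom.comp (algebraMap (kvCompletion F v) L)) (dense_adjoin_kvT v) hSp
      fun x => ?_⟩
  rw [IsScalarTower.algebraMap_apply (kvCompletion F v) L S]
  exact hφ _

/-- the `v`-adic analogue of Statement 8: given a nilpotent `t×t` matrix `N`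
over `C_v`, there is exactly one `𝔽_r`-algebra homomorphism `φ : k_v^sep → M_t(C_v)` with
`φ(T) = ι_v(T)·1 + N`, whose restriction to `k_v` is continuous, and all of whose values have
the form `ι_v(x)·1 + (nilpotent)`; moreover `φ` is injective. -/
theorem stmt_12 (p m : ℕ) [Fact p.Prime] (hm : 0 < m)
    (Fr : Type*) [Field Fr] [Fintype Fr] (hcard : Fintype.card Fr = p ^ m)
    (v : HeightOneSpectrum (Polynomial Fr))
    (Ω : Type*) [Field Ω] [Algebra (kvCompletion Fr v) Ω]
    [IsAlgClosure (kvCompletion Fr v) Ω]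
    [Algebra Fr Ω] [Algebra Fr (kvCompletion Fr v)]
    [IsScalarTower Fr (RatFunc Fr) (kvCompletion Fr v)]
    [IsScalarTower Fr (kvCompletion Fr v) Ω]
    (C : Type*) [NormedField C] [CompleteSpace C] [IsAlgClosed C] [IsUltrametricDist C]
    [Algebra Ω C] [Algebra (kvCompletion Fr v) C] [IsScalarTower (kvCompletion Fr v) Ω C]
    [Algebra Fr C] [IsScalarTower Fr Ω C]
    (hι : Continuous (algebraMap (kvCompletion Fr v) C))
    (t : ℕ) (ht : 1 ≤ t) (N : Matrix (Fin t) (Fin t) C) (hN : IsNilpotent N) :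
    (∃! φ : separableClosure (kvCompletion Fr v) Ω →ₐ[Fr] Matrix (Fin t) (Fin t) C,
        φ (algebraMap (kvCompletion Fr v) (separableClosure (kvCompletion Fr v) Ω)
            (kvT Fr v)) =
          algebraMap C (Matrix (Fin t) (Fin t) C)
            (algebraMap (kvCompletion Fr v) C (kvT Fr v)) + N ∧
        Continuous (fun x : kvCompletion Fr v =>
          φ (algebraMap (kvCompletion Fr v) (separableClosure (kvCompletion Fr v) Ω) x)) ∧
        ∀ x : separableClosure (kvCompletion Fr v) Ω,
          IsNilpotent (φ x -
            algebraMap C (Matrix (Fin t) (Fin t) C) (algebraMap Ω C (x : Ω)))) ∧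
    ∀ φ : separableClosure (kvCompletion Fr v) Ω →ₐ[Fr] Matrix (Fin t) (Fin t) C,
      (φ (algebraMap (kvCompletion Fr v) (separableClosure (kvCompletion Fr v) Ω)
            (kvT Fr v)) =
          algebraMap C (Matrix (Fin t) (Fin t) C)
            (algebraMap (kvCompletion Fr v) C (kvT Fr v)) + N ∧
        Continuous (fun x : kvCompletion Fr v =>
          φ (algebraMap (kvCompletion Fr v) (separableClosure (kvCompletion Fr v) Ω) x)) ∧
        ∀ x : separableClosure (kvCompletion Fr v) Ω,
          IsNilpotent (φ x -
            algebraMap C (Matrix (Fin t) (Fin t) C) (algebraMap Ω C (x : Ω)))) →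
      Function.Injective φ := by
  have : CharP Fr p := charP_of_card_eq_prime_pow hcard
  have : Algebra.IsSeparable (kvCompletion Fr v) (separableClosure (kvCompletion Fr v) Ω) :=
    separableClosure.isSeparable (kvCompletion Fr v) Ω
  have : IsScalarTower Fr (separableClosure (kvCompletion Fr v) Ω) C :=
    .of_algebraMap_eq fun x => IsScalarTower.algebraMap_apply Fr Ω C x
  have : IsScalarTower (kvCompletion Fr v) (separableClosure (kvCompletion Fr v) Ω) C :=
    .of_algebraMap_eq fun x => IsScalarTower.algebraMap_apply (kvCompletion Fr v) Ω C x
  have : ContinuousSMul (kvCompletion Fr v) C := continuousSMul_of_algebraMap _ _ hι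
  have : Nonempty (Fin t) := ⟨⟨0, ht⟩⟩
  obtain ⟨⟨φ, ⟨hφT, hφ⟩, huniq⟩, hcont⟩ := stmt_12_general (p := p) v
    (L := separableClosure (kvCompletion Fr v) Ω) (S := Matrix (Fin t) (Fin t) C)
    (fun _ => matrix_pow_card_eq_zero_of_isNilpotent) hN
  exact ⟨⟨φ, ⟨hφT, hcont φ hφ, hφ⟩, fun ψ hψ => huniq ψ ⟨hψ.1, hψ.2.2⟩⟩,
    fun φ _ => φ.toRingHom.injective⟩
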